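/- Assume μ > 0 and 3λ + 2μ > 0. Then the linear map B on symmetric 3×3 real matrices satisfies B∘B = C; that is, B(B(E)) = λ tr(E) I + 2μ E for every symmetric 3×3 real matrix E. -/

import Mathlib

/-!
`B` multiplies the trace of a matrix by `s * r` and its deviatoric part by `s`, where
`s ^ 2 = 2 * mu` and `r ^ 2 = (1 + ν) / (1 - 2 * ν) = (3 * lam + 2 * mu) / (2 * mu)`.
Hence `B ∘ B` multiplies them by `3 * lam + 2 * mu` and `2 * mu`, which are the factors of the
isotropic elasticity tensor. Positivity of `mu` and `3 * lam + 2 * mu` makes both radicands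
nonnegative and the denominators nonzero.
-/

noncomputable section

open Matrix

/-- 3×3 real matrices. -/
abbrev Mat3 := Matrix (Fin 3) (Fin 3) ℝ

/-- B∘B = C: applying B twice recovers the isotropic elasticity tensor. -/
theorem B_squared_eq_C (lam mu : ℝ) (hmu : 0 < mu) (h3 : 0 < 3 * lam + 2 * mu) :
    let ν := lam / (2 * (lam + mu))
    let B : Mat3 → Mat3 := fun E =>
      Real.sqrt (2 * mu) •
        ((1 / 3 * (Real.sqrt ((1 + ν) / (1 - 2 * ν)) - 1) * Matrix.trace E) • (1 : Mat3) + E)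
    ∀ E : Mat3, E.IsSymm →
      B (B E) = (lam * Matrix.trace E) • (1 : Mat3) + (2 * mu) • E := by
  intro ν B E _
  have hlm : 0 < lam + mu := by linarith
  have hratio : (1 + ν) / (1 - 2 * ν) = (3 * lam + 2 * mu) / (2 * mu) := by
    have h1 : 1 + ν = (3 * lam + 2 * mu) / (2 * (lam + mu)) := by
      simp only [ν]; field_simp; ring
    have h2 : 1 - 2 * ν = (2 * mu) / (2 * (lam + mu)) := by
      simp only [ν]; field_simp; ring
    rw [h1, h2, div_div_div_cancel_right₀ (by positivity)]
  have hs : Real.sqrt (2 * mu) ^ 2 = 2 * mu := Real.sq_sqrt (by positivity)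
  have hr : 2 * mu * Real.sqrt ((1 + ν) / (1 - 2 * ν)) ^ 2 = 3 * lam + 2 * mu := by
    rw [hratio, Real.sq_sqrt (by positivity)]
    field_simp
  simp only [B]
  generalize Real.sqrt ((1 + ν) / (1 - 2 * ν)) = r at hr
  generalize Real.sqrt (2 * mu) = s at hs
  -- The trace of `B E` is `s * r * tr E`.
  have htr : Matrix.trace (s • ((1 / 3 * (r - 1) * Matrix.trace E) • (1 : Mat3) + E))
      = s * r * Matrix.trace E := by
    simp only [Matrix.trace_smul, Matrix.trace_add, Matrix.trace_one, Fintype.card_fin,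
      smul_eq_mul]
    push_cast
    ring
  rw [htr]
  -- Match the coefficients of `1` and of `E`.
  have hlam : s ^ 2 * (1 / 3 * (r ^ 2 - 1)) = lam := by
    rw [hs]; linarith
  rw [← hs, ← hlam]
  module
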